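/- arXiv:2310.01757 — 3 statements merged into one kernel-verified Lean document; each statement's English description precedes it below -/
import Mathlib

section
/- For all i, j ≤ ℓ with i ≠ j, the cAr residuals are A³-orthogonal: r_iᵀA³r_j = 0. -/
open Matrix

/-- Abstract conjugate gradient orthogonality for a symmetric form `B` and `B`-self-adjoint `T`. -/
theorem cg_aux {V : Type*} [AddCommGroup V] [Module ℝ V] (B : V →ₗ[ℝ] V →ₗ[ℝ] ℝ) (T : V →ₗ[ℝ] V)
    (hB : ∀ u v, B u v = B v u) (hT : ∀ u v, B (T u) v = B u (T v)) (ℓ : ℕ)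
    (hpos : ∀ u, u ≠ 0 → B u u ≠ 0) (hTpos : ∀ u, u ≠ 0 → B u (T u) ≠ 0)
    (r p : ℕ → V) (α β : ℕ → ℝ) (h0 : p 0 = r 0)
    (hα : ∀ k, α k = B (r k) (r k) / B (p k) (T (p k)))
    (hr : ∀ k, r (k + 1) = r k - α k • T (p k))
    (hβ : ∀ k, β k = B (r (k + 1)) (r (k + 1)) / B (r k) (r k))
    (hp : ∀ k, p (k + 1) = r (k + 1) + β k • p k)
    (hne : ∀ k < ℓ, r k ≠ 0) :
    ∀ k ≤ ℓ, (∀ i < k, B (r i) (r k) = 0 ∧ B (p i) (T (p k)) = 0 ∧ α i ≠ 0) ∧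
      B (r k) (p k) = B (r k) (r k) := by
  intro k
  induction k with
  | zero => intro _; simp [h0]
  | succ k ih =>
    intro hk
    obtain ⟨h1, h2⟩ := ih (by omega)
    have hρ : B (r k) (r k) ≠ 0 := hpos _ (hne k (by omega))
    have hpk : p k ≠ 0 := by
      intro h
      rw [h, map_zero] at h2
      exact hρ h2.symm
    have hP : B (p k) (T (p k)) ≠ 0 := hTpos _ hpk
    have hαk : α k ≠ 0 := by rw [hα]; exact div_ne_zero hρ hP
    have hαP : α k * B (p k) (T (p k)) = B (r k) (r k) := by rw [hα]; field_simp
    have hβρ : β k * B (r k) (r k) = B (r (k + 1)) (r (k + 1)) := by rw [hβ]; field_simp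
    have hrp : ∀ i ≤ k, B (r i) (T (p k)) = B (p i) (T (p k)) := by
      intro i hi
      cases i with
      | zero => rw [h0]
      | succ j => simp [hp j, (h1 j (by omega)).2.1]
    have hR : ∀ i ≤ k, B (r i) (r (k + 1)) = 0 := by
      intro i hi
      rw [hr k, map_sub, map_smul, smul_eq_mul, hrp i hi]
      rcases hi.lt_or_eq with h | h
      · rw [(h1 i h).1, (h1 i h).2.1]; simp
      · rw [h, hαP, sub_self]
    have hαi : ∀ i ≤ k, α i ≠ 0 := by
      intro i hi
      rcases hi.lt_or_eq with h | h
      · exact (h1 i h).2.2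
      · rw [h]; exact hαk
    have hkey : ∀ i ≤ k, α i * B (p i) (T (r (k + 1))) = - B (r (i + 1)) (r (k + 1)) := by
      intro i hi
      have h := congrArg (fun v => B v (r (k + 1))) (hr i)
      simp only [map_sub, map_smul, LinearMap.sub_apply, LinearMap.smul_apply, smul_eq_mul, hT,
        hR i hi] at h
      linarith
    refine ⟨fun i hi => ⟨hR i (by omega), ?_, hαi i (by omega)⟩, ?_⟩
    · have hi' : i ≤ k := by omega
      have h := hkey i hi'
      apply (mul_eq_zero.mp _).resolve_left (hαi i hi')
      rw [hp k, map_add, map_smul, map_add, map_smul, smul_eq_mul, mul_add, h]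
      rcases hi'.lt_or_eq with h' | h'
      · rw [hR (i + 1) (by omega), (h1 i h').2.1]; simp
      · subst h'
        linear_combination β i * hαP + hβρ
    · have h : B (r (k + 1)) (p k) = 0 := by
        rw [hr k, map_sub, map_smul, LinearMap.sub_apply, LinearMap.smul_apply, smul_eq_mul, hT,
          h2, hαP, sub_self]
      rw [hp k, map_add, map_smul, h]; simp

/-- Paper: Theorem 6.3(c).  cAr iteration for SPD `A` (with `ρ_k = r_kᵀA³r_k`,
`α_k = ρ_k/‖A²p_k‖²`, `β_k = ρ_{k+1}/ρ_k`), terminating at step `ℓ ≤ n`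
(`r_k ≠ 0` for `k < ℓ` and `r_ℓ = 0`):  the residuals are `A³`-orthogonal: `r_iᵀ A³ r_j = 0` for `i ≠ j`. -/
theorem car_residuals_A3_orthogonal (n ℓ : ℕ) (hℓn : ℓ ≤ n)
    (A : Matrix (Fin n) (Fin n) ℝ) (hA : A.PosDef) (b : Fin n → ℝ)
    (x r p : ℕ → (Fin n → ℝ)) (ρ α β : ℕ → ℝ)
    (hx0 : x 0 = 0) (hr0 : r 0 = b) (hp0 : p 0 = b)
    (hρ : ∀ k, ρ k = r k ⬝ᵥ (A ^ 3).mulVec (r k))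
    (hα : ∀ k, α k = ρ k / ((A ^ 2).mulVec (p k) ⬝ᵥ (A ^ 2).mulVec (p k)))
    (hx : ∀ k, x (k + 1) = x k + α k • p k)
    (hr : ∀ k, r (k + 1) = r k - α k • A.mulVec (p k))
    (hβ : ∀ k, β k = ρ (k + 1) / ρ k)
    (hp : ∀ k, p (k + 1) = r (k + 1) + β k • p k)
    (hne : ∀ k < ℓ, r k ≠ 0) (hfin : r ℓ = 0) :
    ∀ i ≤ ℓ, ∀ j ≤ ℓ, i ≠ j → r i ⬝ᵥ (A ^ 3).mulVec (r j) = 0 := by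
  have hAt : Aᵀ = A := by simpa using hA.isHermitian.eq
  have hsym : ∀ (m : ℕ) (u v : Fin n → ℝ), (A ^ m).mulVec u ⬝ᵥ v = u ⬝ᵥ (A ^ m).mulVec v := by
    intro m u v
    rw [dotProduct_mulVec, ← mulVec_transpose, transpose_pow, hAt]
  have hinj : ∀ (m : ℕ) (u : Fin n → ℝ), u ≠ 0 → (A ^ m).mulVec u ≠ 0 := by
    intro m u hu h
    have hU : IsUnit (A ^ m) := hA.isUnit.pow m
    exact hu (Matrix.mulVec_injective_iff_isUnit.mpr hU (by rw [h, mulVec_zero]))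
  have hBa : ∀ u v, Matrix.toBilin' (A ^ 3) u v = u ⬝ᵥ (A ^ 3).mulVec v := fun u v =>
    Matrix.toBilin'_apply' _ _ _
  have hBT : ∀ u, u ⬝ᵥ (A ^ 3).mulVec (A.mulVec u) = (A ^ 2).mulVec u ⬝ᵥ (A ^ 2).mulVec u := by
    intro u
    rw [hsym, mulVec_mulVec, mulVec_mulVec, ← pow_succ, ← pow_add]
  have hBB : ∀ u v : Fin n → ℝ, u ⬝ᵥ (A ^ 3).mulVec v = v ⬝ᵥ (A ^ 3).mulVec u := by
    intro u v
    rw [← hsym, dotProduct_comm]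
  have main := cg_aux (Matrix.toBilin' (A ^ 3)) A.mulVecLin
    (by intro u v; rw [hBa, hBa, hBB])
    (by
      intro u v
      rw [hBa, hBa, mulVecLin_apply, mulVecLin_apply]
      have := hsym 1 u ((A ^ 3).mulVec v)
      rw [pow_one] at this
      rw [this, mulVec_mulVec, mulVec_mulVec, ← pow_succ, ← pow_succ'])
    ℓ
    (by
      intro u hu
      have h1 : u ⬝ᵥ (A ^ 3).mulVec u = A.mulVec u ⬝ᵥ A.mulVec (A.mulVec u) := by
        have := hsym 1 u (A.mulVec (A.mulVec u))
        rw [pow_one] at this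
        rw [this, mulVec_mulVec, mulVec_mulVec, pow_succ, pow_two, mul_assoc]
      rw [hBa, h1]
      have h2 := hinj 1 u hu
      rw [pow_one] at h2
      have h3 := hA.dotProduct_mulVec_pos h2
      simp only [star_trivial] at h3
      exact h3.ne')
    (by
      intro u hu
      rw [hBa, mulVecLin_apply, hBT]
      exact fun h => hinj 2 u hu (dotProduct_self_eq_zero.mp h))
    r p α β (by rw [hp0, hr0])
    (by intro k; rw [hBa, hBa, mulVecLin_apply, hBT, hα, hρ])
    (by intro k; rw [mulVecLin_apply, hr])
    (by intro k; rw [hBa, hBa, hβ, hρ, hρ])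
    hp hne
  intro i hi j hj hij
  rcases lt_or_gt_of_ne hij with h | h
  · rw [← hBa]; exact ((main j hj).1 i h).1
  · rw [hBB, ← hBa]; exact ((main i hi).1 j h).1
end

section
/- For all i, j ≤ ℓ, the cAr directions satisfy p_iᵀA³p_j ≥ 0. -/
open Matrix

lemma car_abs {E : Type*} [AddCommGroup E] [Module ℝ E] (B : E →ₗ[ℝ] E →ₗ[ℝ] ℝ) (T : E →ₗ[ℝ] E)
    (hs : ∀ u v, B u v = B v u) (hT : ∀ u v, B (T u) v = B u (T v))
    (hB : ∀ u, u ≠ 0 → 0 < B u u) (hBT : ∀ u, u ≠ 0 → 0 < B u (T u))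
    (ℓ : ℕ) (r p : ℕ → E) (ρ α β : ℕ → ℝ) (h0 : r 0 = p 0)
    (hρ : ∀ k, ρ k = B (r k) (r k))
    (hα : ∀ k, α k = ρ k / B (p k) (T (p k)))
    (hr : ∀ k, r (k + 1) = r k - α k • T (p k))
    (hβ : ∀ k, β k = ρ (k + 1) / ρ k)
    (hp : ∀ k, p (k + 1) = r (k + 1) + β k • p k)
    (hne : ∀ k < ℓ, r k ≠ 0) :
    ∀ i ≤ ℓ, ∀ j ≤ ℓ, 0 ≤ B (p i) (p j) := by
  have Q : ∀ k ≤ ℓ, (∀ i < k, B (r k) (p i) = 0) ∧ (∀ i < k, B (r k) (r i) = 0) ∧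
      (∀ i < k, B (p k) (T (p i)) = 0) ∧ B (r k) (p k) = ρ k ∧ (∀ i < k, α i ≠ 0) := by
    intro k
    induction k with
    | zero =>
      intro _
      refine ⟨by simp, by simp, by simp, ?_, by simp⟩
      rw [hρ, h0]
    | succ k ih =>
      intro hk
      obtain ⟨h1, h2, h3, h4, h5⟩ := ih (by omega)
      have hrk := hne k (by omega)
      have hρk : 0 < ρ k := by rw [hρ]; exact hB _ hrk
      have hpk : p k ≠ 0 := by
        intro h
        rw [h, map_zero] at h4
        linarith
      have hd := hBT _ hpk
      have hαd : α k * B (p k) (T (p k)) = ρ k := by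
        rw [hα]; field_simp
      have hαk : α k ≠ 0 := by
        rw [hα]; positivity
      have g1 : ∀ i < k + 1, B (r (k+1)) (p i) = 0 := by
        intro i hi
        rw [hr]
        simp only [map_sub, map_smul, LinearMap.sub_apply, LinearMap.smul_apply, smul_eq_mul, hT]
        rcases Nat.lt_succ_iff_lt_or_eq.mp hi with h | rfl
        · rw [h1 i h, h3 i h]; ring
        · rw [h4, hαd]; ring
      have g2 : ∀ i < k + 1, B (r (k+1)) (r i) = 0 := by
        intro i hi
        cases i with
        | zero => rw [h0]; exact g1 0 hi
        | succ i =>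
          have : r (i+1) = p (i+1) - β i • p i := by rw [hp]; abel
          rw [this]
          simp [g1 (i+1) hi, g1 i (by omega)]
      have g5 : ∀ i < k + 1, α i ≠ 0 := by
        intro i hi
        rcases Nat.lt_succ_iff_lt_or_eq.mp hi with h | rfl
        · exact h5 i h
        · exact hαk
      have key : ∀ i, α i * B (r (k+1)) (T (p i)) = B (r (k+1)) (r i) - B (r (k+1)) (r (i+1)) := by
        intro i
        rw [hr i]
        simp
      refine ⟨g1, g2, ?_, ?_, g5⟩
      · intro i hi
        rw [hp]
        simp only [map_add, map_smul, LinearMap.add_apply, LinearMap.smul_apply, smul_eq_mul]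
        have ki := key i
        rcases Nat.lt_succ_iff_lt_or_eq.mp hi with h | rfl
        · rw [g2 i hi, g2 (i+1) (by omega), sub_zero] at ki
          rw [h3 i h, (mul_eq_zero.mp ki).resolve_left (g5 i hi)]; ring
        · rw [g2 i hi, ← hρ] at ki
          apply mul_left_cancel₀ hαk
          have : β i * ρ i = ρ (i+1) := by rw [hβ]; field_simp
          linear_combination ki + β i * hαd + this
      · rw [hp]
        simp [g1 k (by omega), hρ]
  have hB0 : ∀ u, 0 ≤ B u u := by
    intro u
    by_cases h : u = 0
    · simp [h]
    · exact (hB u h).le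
  have hβ0 : ∀ k, 0 ≤ β k := by
    intro k
    rw [hβ, hρ, hρ]
    exact div_nonneg (hB0 _) (hB0 _)
  have M : ∀ i j, i ≤ j → j ≤ ℓ → 0 ≤ B (p j) (p i) := by
    intro i j hij
    induction j, hij using Nat.le_induction with
    | base => intro _; exact hB0 _
    | succ j hij ih =>
      intro hj
      rw [hp]
      simp only [map_add, map_smul, LinearMap.add_apply, LinearMap.smul_apply, smul_eq_mul]
      rw [(Q (j+1) hj).1 i (by omega), zero_add]
      exact mul_nonneg (hβ0 j) (ih (by omega))
  intro i hi j hj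
  rcases le_total i j with h | h
  · rw [hs]; exact M i j h hj
  · exact M j i h hi

/-- Paper: Theorem 6.3(f).  cAr iteration for SPD `A` (with `ρ_k = r_kᵀA³r_k`,
`α_k = ρ_k/‖A²p_k‖²`, `β_k = ρ_{k+1}/ρ_k`), terminating at step `ℓ ≤ n`
(`r_k ≠ 0` for `k < ℓ` and `r_ℓ = 0`):  the directions satisfy `p_iᵀ A³ p_j ≥ 0`. -/
theorem car_pA3p_nonneg (n ℓ : ℕ) (hℓn : ℓ ≤ n)
    (A : Matrix (Fin n) (Fin n) ℝ) (hA : A.PosDef) (b : Fin n → ℝ)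
    (x r p : ℕ → (Fin n → ℝ)) (ρ α β : ℕ → ℝ)
    (hx0 : x 0 = 0) (hr0 : r 0 = b) (hp0 : p 0 = b)
    (hρ : ∀ k, ρ k = r k ⬝ᵥ (A ^ 3).mulVec (r k))
    (hα : ∀ k, α k = ρ k / ((A ^ 2).mulVec (p k) ⬝ᵥ (A ^ 2).mulVec (p k)))
    (hx : ∀ k, x (k + 1) = x k + α k • p k)
    (hr : ∀ k, r (k + 1) = r k - α k • A.mulVec (p k))
    (hβ : ∀ k, β k = ρ (k + 1) / ρ k)
    (hp : ∀ k, p (k + 1) = r (k + 1) + β k • p k)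
    (hne : ∀ k < ℓ, r k ≠ 0) (hfin : r ℓ = 0) :
    ∀ i ≤ ℓ, ∀ j ≤ ℓ, 0 ≤ p i ⬝ᵥ (A ^ 3).mulVec (p j) := by
  have hAt : Aᵀ = A := by simpa using hA.isHermitian.eq
  have sym : ∀ u v : Fin n → ℝ, u ⬝ᵥ A *ᵥ v = (A *ᵥ u) ⬝ᵥ v := by
    intro u v
    rw [dotProduct_mulVec, ← mulVec_transpose, hAt]
  have e3 : ∀ v : Fin n → ℝ, (A ^ 3) *ᵥ v = A *ᵥ (A *ᵥ (A *ᵥ v)) := by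
    intro v; simp [pow_succ, mulVec_mulVec, Matrix.mul_assoc]
  have e2 : ∀ v : Fin n → ℝ, (A ^ 2) *ᵥ v = A *ᵥ (A *ᵥ v) := by
    intro v; simp [pow_succ, mulVec_mulVec]
  have pos : ∀ u : Fin n → ℝ, u ≠ 0 → 0 < u ⬝ᵥ A *ᵥ u := by
    intro u hu
    simpa using hA.dotProduct_mulVec_pos hu
  have inj : ∀ u : Fin n → ℝ, u ≠ 0 → A *ᵥ u ≠ 0 := by
    intro u hu h
    have := pos u hu
    rw [h, dotProduct_zero] at this
    exact lt_irrefl _ this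
  have hBe : ∀ u v, Matrix.toLinearMap₂' ℝ (A ^ 3) u v = u ⬝ᵥ (A ^ 3) *ᵥ v := by
    intro u v; exact Matrix.toLinearMap₂'_apply' _ _ _
  have := car_abs (Matrix.toLinearMap₂' ℝ (A ^ 3)) (Matrix.mulVecLin A)
    (by intro u v; rw [hBe, hBe, e3, e3, sym, sym, sym, dotProduct_comm])
    (by intro u v; simp only [hBe, e3, mulVecLin_apply]; rw [← sym])
    (by intro u hu; rw [hBe, e3, sym]; exact pos _ (inj u hu))
    (by
      intro u hu
      rw [hBe, e3, mulVecLin_apply, sym, sym]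
      have h := inj _ (inj u hu)
      exact lt_of_le_of_ne (Finset.sum_nonneg fun i _ => mul_self_nonneg _)
        (fun h' => h (dotProduct_self_eq_zero.mp h'.symm)))
    ℓ r p ρ α β (by rw [hr0, hp0]) (by intro k; rw [hBe, hρ])
    (by intro k; rw [hα, hBe, e3, mulVecLin_apply, sym, sym, e2])
    hr hβ hp hne
  simpa only [hBe] using this
end

section
/- For all i, j ≤ ℓ, the cAr directions have nonnegative mutual inner products: p_iᵀp_j ≥ 0. -/
open Matrix

/-- The bilinear form `u ↦ uᵀ Aᵐ v`. -/
def carB {n : ℕ} (A : Matrix (Fin n) (Fin n) ℝ) (m : ℕ) (u v : Fin n → ℝ) : ℝ :=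
  u ⬝ᵥ (A ^ m).mulVec v

section carlemmas

variable {n : ℕ} {A : Matrix (Fin n) (Fin n) ℝ}

theorem carB_symm (hA : A.PosDef) (m : ℕ) (u v : Fin n → ℝ) : carB A m u v = carB A m v u := by
  have hT : (A ^ m)ᵀ = A ^ m := by
    have h1 : Aᵀ = A := by
      have := hA.1.eq
      rwa [conjTranspose_eq_transpose_of_trivial] at this
    rw [transpose_pow, h1]
  unfold carB
  rw [dotProduct_mulVec, ← mulVec_transpose, hT, dotProduct_comm]

theorem carB_add_right (m : ℕ) (u v w : Fin n → ℝ) :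
    carB A m u (v + w) = carB A m u v + carB A m u w := by
  simp [carB, mulVec_add, dotProduct_add]

theorem carB_sub_right (m : ℕ) (u v w : Fin n → ℝ) :
    carB A m u (v - w) = carB A m u v - carB A m u w := by
  simp [carB, mulVec_sub, dotProduct_sub]

theorem carB_smul_right (m : ℕ) (c : ℝ) (u v : Fin n → ℝ) :
    carB A m u (c • v) = c * carB A m u v := by
  simp [carB, mulVec_smul, dotProduct_smul]

theorem carB_mul_right (m : ℕ) (u v : Fin n → ℝ) :
    carB A m u (A.mulVec v) = carB A (m + 1) u v := by
  simp [carB, mulVec_mulVec, pow_succ]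

theorem carB_pos (hA : A.PosDef) (m : ℕ) (u : Fin n → ℝ) (hu : u ≠ 0) : 0 < carB A m u u := by
  induction m using Nat.twoStepInduction generalizing u with
  | zero =>
    have : u ⬝ᵥ u ≠ 0 := fun h => hu (dotProduct_self_eq_zero.1 h)
    have h2 : 0 ≤ u ⬝ᵥ u := Finset.sum_nonneg fun i _ => mul_self_nonneg (u i)
    simpa [carB] using lt_of_le_of_ne h2 this.symm
  | one => simpa [carB] using hA.dotProduct_mulVec_pos hu
  | more m ih _ =>
    have hAu : A.mulVec u ≠ 0 := by
      intro h
      have := hA.dotProduct_mulVec_pos hu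
      rw [h] at this
      simp at this
    have := ih _ hAu
    rwa [carB_mul_right, carB_symm hA, carB_mul_right] at this

theorem carB_zero_left (m : ℕ) (u : Fin n → ℝ) : carB A m 0 u = 0 := by
  simp [carB]

theorem carB_zero_right (m : ℕ) (u : Fin n → ℝ) : carB A m u 0 = 0 := by
  simp [carB]

theorem carB_nonneg (hA : A.PosDef) (m : ℕ) (u : Fin n → ℝ) : 0 ≤ carB A m u u := by
  by_cases hu : u = 0
  · simp [hu, carB_zero_left]
  · exact (carB_pos hA m u hu).le

theorem carB_sq (hA : A.PosDef) (u : Fin n → ℝ) :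
    (A ^ 2).mulVec u ⬝ᵥ (A ^ 2).mulVec u = carB A 4 u u := by
  have h := carB_symm hA 2 ((A ^ 2).mulVec u) u
  unfold carB at h
  rw [h, mulVec_mulVec, ← pow_add, carB]

theorem car_orth (hA : A.PosDef) (ℓ : ℕ)
    (r p : ℕ → (Fin n → ℝ)) (ρ α β : ℕ → ℝ) (h0 : p 0 = r 0)
    (hρ : ∀ k, ρ k = carB A 3 (r k) (r k))
    (hα : ∀ k, α k = ρ k / carB A 4 (p k) (p k))
    (hr : ∀ k, r (k + 1) = r k - α k • A.mulVec (p k))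
    (hβ : ∀ k, β k = ρ (k + 1) / ρ k)
    (hp : ∀ k, p (k + 1) = r (k + 1) + β k • p k)
    (hne : ∀ k < ℓ, r k ≠ 0) (k : ℕ) :
    k ≤ ℓ → (∀ i < k, 0 < α i) ∧ (∀ i < k, carB A 3 (r k) (p i) = 0) ∧
      (∀ i < k, carB A 4 (p k) (p i) = 0) := by
  induction k with
  | zero => simp
  | succ k ih =>
    intro hk
    obtain ⟨h1, h2, h3⟩ := ih (by omega)
    have hρk : 0 < ρ k := by rw [hρ]; exact carB_pos hA 3 _ (hne k (by omega))
    have hrp : carB A 3 (r k) (p k) = ρ k := by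
      cases k with
      | zero => rw [h0, hρ]
      | succ k => rw [hp k, carB_add_right, carB_smul_right, h2 k (by omega), hρ]; ring
    have hpk : p k ≠ 0 := by
      intro h
      rw [h, carB_zero_right] at hrp
      linarith
    have h4 : 0 < carB A 4 (p k) (p k) := carB_pos hA 4 _ hpk
    have hαk : 0 < α k := by rw [hα]; positivity
    have hα4 : α k * carB A 4 (p k) (p k) = ρ k := by rw [hα]; field_simp
    have g1 : ∀ i < k + 1, 0 < α i := by
      intro i hi
      rcases Nat.lt_succ_iff_lt_or_eq.1 hi with h | rfl
      · exact h1 i h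
      · exact hαk
    have g2 : ∀ i < k + 1, carB A 3 (r (k + 1)) (p i) = 0 := by
      intro i hi
      have e : carB A 3 (r (k + 1)) (p i)
          = carB A 3 (r k) (p i) - α k * carB A 4 (p k) (p i) := by
        rw [carB_symm hA, hr, carB_sub_right, carB_smul_right, carB_mul_right,
          carB_symm hA 3 (p i), carB_symm hA _ (p i)]
      rw [e]
      rcases Nat.lt_succ_iff_lt_or_eq.1 hi with h | rfl
      · rw [h2 i h, h3 i h]; ring
      · rw [hrp, hα4]; ring
    have g2' : ∀ i < k + 1, carB A 3 (r (k + 1)) (r i) = 0 := by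
      intro i hi
      cases i with
      | zero => rw [← h0]; exact g2 0 hi
      | succ i =>
        have e := g2 (i + 1) hi
        rw [hp, carB_add_right, carB_smul_right, g2 i (by omega)] at e
        linarith
    refine ⟨g1, g2, ?_⟩
    intro i hi
    have e : carB A 4 (p (k + 1)) (p i)
        = carB A 4 (r (k + 1)) (p i) + β k * carB A 4 (p k) (p i) := by
      rw [carB_symm hA, hp, carB_add_right, carB_smul_right,
          carB_symm hA 4 (p i), carB_symm hA 4 (p i)]
    have e2 : carB A 3 (r (k + 1)) (r (i + 1))
        = carB A 3 (r (k + 1)) (r i) - α i * carB A 4 (r (k + 1)) (p i) := by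
      rw [hr i, carB_sub_right, carB_smul_right, carB_mul_right]
    rw [g2' i hi] at e2
    have hαi := g1 i hi
    rcases Nat.lt_succ_iff_lt_or_eq.1 hi with h | rfl
    · rw [g2' (i + 1) (by omega)] at e2
      have : carB A 4 (r (k + 1)) (p i) = 0 := by
        have : α i * carB A 4 (r (k + 1)) (p i) = 0 := by linarith
        rcases mul_eq_zero.1 this with h | h
        · linarith
        · exact h
      rw [e, this, h3 i h]; ring
    · rw [← hρ] at e2
      have hb : β i * ρ i = ρ (i + 1) := by rw [hβ]; field_simp
      have : α i * carB A 4 (p (i + 1)) (p i) = 0 := by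
        rw [e]
        linear_combination e2 + β i * hα4 + hb
      rcases mul_eq_zero.1 this with h | h
      · linarith
      · exact h

end carlemmas

/-- Paper: Theorem 6.3(i).  cAr iteration for SPD `A` (with `ρ_k = r_kᵀA³r_k`,
`α_k = ρ_k/‖A²p_k‖²`, `β_k = ρ_{k+1}/ρ_k`), terminating at step `ℓ ≤ n`
(`r_k ≠ 0` for `k < ℓ` and `r_ℓ = 0`):  the directions have nonnegative mutual inner products: `p_iᵀ p_j ≥ 0`. -/
theorem car_pp_nonneg (n ℓ : ℕ) (hℓn : ℓ ≤ n)
    (A : Matrix (Fin n) (Fin n) ℝ) (hA : A.PosDef) (b : Fin n → ℝ)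
    (x r p : ℕ → (Fin n → ℝ)) (ρ α β : ℕ → ℝ)
    (hx0 : x 0 = 0) (hr0 : r 0 = b) (hp0 : p 0 = b)
    (hρ : ∀ k, ρ k = r k ⬝ᵥ (A ^ 3).mulVec (r k))
    (hα : ∀ k, α k = ρ k / ((A ^ 2).mulVec (p k) ⬝ᵥ (A ^ 2).mulVec (p k)))
    (hx : ∀ k, x (k + 1) = x k + α k • p k)
    (hr : ∀ k, r (k + 1) = r k - α k • A.mulVec (p k))
    (hβ : ∀ k, β k = ρ (k + 1) / ρ k)
    (hp : ∀ k, p (k + 1) = r (k + 1) + β k • p k)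
    (hne : ∀ k < ℓ, r k ≠ 0) (hfin : r ℓ = 0) :
    ∀ i ≤ ℓ, ∀ j ≤ ℓ, 0 ≤ p i ⬝ᵥ p j := by
  subst hr0
  have hρ' : ∀ k, ρ k = carB A 3 (r k) (r k) := hρ
  have hα' : ∀ k, α k = ρ k / carB A 4 (p k) (p k) := by
    intro k; rw [hα, carB_sq hA]
  have orth := car_orth hA ℓ r p ρ α β hp0 hρ' hα' hr hβ hp hne
  have hρ0 : ∀ k, 0 ≤ ρ k := by intro k; rw [hρ']; exact carB_nonneg hA 3 _
  have hα0 : ∀ k, 0 ≤ α k := by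
    intro k; rw [hα']; exact div_nonneg (hρ0 k) (carB_nonneg hA 4 _)
  have hβ0 : ∀ k, 0 ≤ β k := by
    intro k; rw [hβ]; exact div_nonneg (hρ0 _) (hρ0 _)
  -- from residuals to directions
  have stepP : ∀ (m : ℕ) (u : Fin n → ℝ), (∀ j ≤ ℓ, 0 ≤ carB A m u (r j)) →
      ∀ j ≤ ℓ, 0 ≤ carB A m u (p j) := by
    intro m u h j
    induction j with
    | zero => intro hj; rw [hp0]; exact h 0 hj
    | succ j ih =>
      intro hj
      rw [hp, carB_add_right, carB_smul_right]
      exact add_nonneg (h _ hj) (mul_nonneg (hβ0 j) (ih (by omega)))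
  -- from directions to residuals, lowering the power
  have stepR : ∀ (m : ℕ) (u : Fin n → ℝ), (∀ j ≤ ℓ, 0 ≤ carB A (m + 1) u (p j)) →
      ∀ j ≤ ℓ, 0 ≤ carB A m u (r j) := by
    intro m u h j hj
    induction hj using Nat.decreasingInduction with
    | self => rw [hfin, carB_zero_right]
    | of_succ j hj ih =>
      rw [hr, carB_sub_right, carB_smul_right, carB_mul_right] at ih
      have := mul_nonneg (hα0 j) (h j hj.le)
      linarith
  have low : ∀ m : ℕ, (∀ i ≤ ℓ, ∀ j ≤ ℓ, 0 ≤ carB A (m + 1) (p i) (p j)) →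
      ∀ i ≤ ℓ, ∀ j ≤ ℓ, 0 ≤ carB A m (p i) (p j) :=
    fun m h i hi => stepP m (p i) (stepR m (p i) (h i hi))
  have h4 : ∀ i ≤ ℓ, ∀ j ≤ ℓ, 0 ≤ carB A 4 (p i) (p j) := by
    intro i hi j hj
    rcases lt_trichotomy i j with h | rfl | h
    · rw [carB_symm hA, (orth j hj).2.2 i h]
    · exact carB_nonneg hA 4 _
    · rw [(orth i hi).2.2 j h]
  have h0 := low 0 (low 1 (low 2 (low 3 h4)))
  intro i hi j hj
  simpa [carB] using h0 i hi j hj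
end
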